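/- Let G be a finite group having a Sylow p-subgroup which acts nontrivially on a connected finite poset 𝒫, where p = char k ≥ 5, and suppose 𝒫 is a directed tree (its Hasse diagram is a tree). Then the transporter category 𝒯 = G ∝ 𝒫 is of infinite representation type. -/

import Mathlib

set_option maxHeartbeats 1000000

noncomputable section
open Finset
open scoped Classical


section CoreSGA

variable {k : Type} [CommRing k] {Λ : Type} [Ring Λ] [Algebra k Λ]
variable {G : Type} [Group G] [Fintype G]

/-- The skew group algebra `Λ ⊗_k kG` (as functions `G → Λ`), with multiplication
`(λ ⊗ g) ⬝ (μ ⊗ h) = λ · g(μ) ⊗ gh`. -/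
structure SGA (σ : G →* (Λ ≃ₐ[k] Λ)) : Type where
  toFun : G → Λ

namespace SGA

variable {σ : G →* (Λ ≃ₐ[k] Λ)}

@[simp] lemma mk_toFun (f : G → Λ) : (SGA.mk f : SGA σ).toFun = f := rfl

@[ext] lemma ext {f h : SGA σ} (w : ∀ g, f.toFun g = h.toFun g) : f = h := by
  cases f; cases h; simp only [mk.injEq]; funext g; exact w g

/-- The underlying-function equivalence. -/
def equivFun : SGA σ ≃ (G → Λ) := ⟨toFun, mk, fun _ => rfl, fun _ => rfl⟩

instance : AddCommGroup (SGA σ) := (equivFun (σ := σ)).addCommGroup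

@[simp] lemma toFun_add (f h : SGA σ) (g : G) : (f + h).toFun g = f.toFun g + h.toFun g := rfl
@[simp] lemma toFun_zero (g : G) : (0 : SGA σ).toFun g = 0 := rfl
@[simp] lemma toFun_neg (f : SGA σ) (g : G) : (-f).toFun g = -(f.toFun g) := rfl

instance : Mul (SGA σ) :=
  ⟨fun f h => ⟨fun x => ∑ g : G, f.toFun g * σ g (h.toFun (g⁻¹ * x))⟩⟩

instance : One (SGA σ) := ⟨⟨fun x => if x = 1 then 1 else 0⟩⟩

@[simp] lemma toFun_mul (f h : SGA σ) (x : G) :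
    (f * h).toFun x = ∑ g : G, f.toFun g * σ g (h.toFun (g⁻¹ * x)) := rfl

lemma toFun_one (x : G) : (1 : SGA σ).toFun x = if x = 1 then 1 else 0 := rfl

protected lemma one_mul (f : SGA σ) : 1 * f = f := by
  ext x
  rw [toFun_mul]
  rw [Finset.sum_eq_single (1 : G)]
  · simp [toFun_one]
  · intro b _ hb
    simp [toFun_one, hb]
  · simp

protected lemma mul_one (f : SGA σ) : f * 1 = f := by
  ext x
  rw [toFun_mul]
  rw [Finset.sum_eq_single (x : G)]
  · simp [toFun_one]
  · intro b _ hb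
    have : b⁻¹ * x ≠ 1 := by
      intro hc
      rw [inv_mul_eq_one] at hc
      exact hb hc
    simp [toFun_one, this]
  · simp

protected lemma mul_assoc (f h e : SGA σ) : f * h * e = f * (h * e) := by
  ext x
  rw [toFun_mul, toFun_mul]
  simp only [toFun_mul, Finset.sum_mul, map_sum, Finset.mul_sum, map_mul]
  rw [Finset.sum_comm]
  refine Finset.sum_congr rfl fun u _ => ?_
  rw [← Fintype.sum_equiv (Equiv.mulLeft u)
    (fun v => f.toFun u * σ u (h.toFun v) * σ (u * v) (e.toFun ((u * v)⁻¹ * x)))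
    (fun g => f.toFun u * σ u (h.toFun (u⁻¹ * g)) * σ g (e.toFun (g⁻¹ * x)))
    (fun v => by simp [Equiv.mulLeft])]
  refine Finset.sum_congr rfl fun v _ => ?_
  have h3 : (u * v)⁻¹ * x = v⁻¹ * (u⁻¹ * x) := by group
  have h4 : σ u (σ v (e.toFun (v⁻¹ * (u⁻¹ * x)))) = σ (u * v) (e.toFun (v⁻¹ * (u⁻¹ * x))) := by
    rw [map_mul σ]; rfl
  rw [h3, ← h4, mul_assoc]

protected lemma left_distrib (f h e : SGA σ) : f * (h + e) = f * h + f * e := by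
  ext x
  simp [mul_add, Finset.sum_add_distrib]

protected lemma right_distrib (f h e : SGA σ) : (f + h) * e = f * e + h * e := by
  ext x
  simp [add_mul, Finset.sum_add_distrib]

protected lemma zero_mul (f : SGA σ) : 0 * f = 0 := by
  ext x; simp

protected lemma mul_zero (f : SGA σ) : f * 0 = 0 := by
  ext x; simp

instance instRing : Ring (SGA σ) :=
  { (inferInstance : AddCommGroup (SGA σ)),
    (inferInstance : Mul (SGA σ)), (inferInstance : One (SGA σ)) with
    mul_assoc := SGA.mul_assoc
    one_mul := SGA.one_mul
    mul_one := SGA.mul_one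
    left_distrib := SGA.left_distrib
    right_distrib := SGA.right_distrib
    zero_mul := SGA.zero_mul
    mul_zero := SGA.mul_zero }

/-- The canonical inclusion `Λ → ΛG`, `λ ↦ λ ⊗ 1`. -/
def emb (σ : G →* (Λ ≃ₐ[k] Λ)) : Λ →+* SGA σ where
  toFun a := ⟨fun x => if x = 1 then a else 0⟩
  map_one' := rfl
  map_zero' := by ext x; simp
  map_add' a b := by ext x; by_cases hx : x = 1 <;> simp [hx]
  map_mul' a b := by
    ext x
    rw [toFun_mul]
    rw [Finset.sum_eq_single (1 : G)]
    · by_cases hx : x = 1 <;> simp [hx]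
    · intro b' _ hb'; simp [hb']
    · simp

end SGA

end CoreSGA

section GeneralDefs

/-- An idempotent `e` is primitive if it is nonzero and cannot be written as a sum of two
nonzero orthogonal idempotents. -/
def IsPrimitiveIdempotent (A : Type) [Ring A] (e : A) : Prop :=
  IsIdempotentElem e ∧ e ≠ 0 ∧
    ∀ f g : A, IsIdempotentElem f → IsIdempotentElem g → f * g = 0 → g * f = 0 →
      e = f + g → f = 0 ∨ g = 0

/-- A finite family `e : Fin n → A` is a complete set of primitive orthogonal idempotents. -/
def IsCompletePrimitiveOrthogonalSystem (A : Type) [Ring A] {n : ℕ} (e : Fin n → A) : Prop :=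
  (∀ i, IsPrimitiveIdempotent A (e i)) ∧
    (∀ i j, i ≠ j → e i * e j = 0) ∧ (∑ i, e i = 1)

/-- A ring is connected (indecomposable as an algebra) if its only central idempotents
are `0` and `1`. -/
def IsConnectedRing (A : Type) [Ring A] : Prop :=
  Nontrivial A ∧ ∀ e : A, IsIdempotentElem e → (∀ x : A, e * x = x * e) → e = 0 ∨ e = 1

/-- A ring is basic if it admits a complete set of primitive orthogonal idempotents `e i`
such that the indecomposable projective left modules `A e i` are pairwise nonisomorphic. -/
def IsBasicRing (A : Type) [Ring A] : Prop :=
  ∃ (n : ℕ) (e : Fin n → A), IsCompletePrimitiveOrthogonalSystem A e ∧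
    ∀ i j, i ≠ j →
      IsEmpty ((Submodule.span A {e i} : Submodule A A) ≃ₗ[A] (Submodule.span A {e j} : Submodule A A))

/-- `projDimLE A n M` : the `A`-module `M` admits a projective resolution of length at
most `n`, i.e. has projective dimension `≤ n`. -/
def projDimLE (A : Type) [Ring A] (n : ℕ) (M : Type) [AddCommGroup M] [Module A M] : Prop :=
  ∃ (P : ℕ → ModuleCat.{0} A) (d : (i : ℕ) → (P (i + 1) →ₗ[A] P i)) (ε : P 0 →ₗ[A] M),
    (∀ i, Module.Projective A (P i)) ∧
    Function.Surjective ε ∧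
    LinearMap.range (d 0) = LinearMap.ker ε ∧
    (∀ i, LinearMap.range (d (i + 1)) = LinearMap.ker (d i)) ∧
    (∀ i, n < i → ∀ x : P i, x = 0)

/-- The (little) global dimension of a ring, as an element of `ℕ∞`: the least `n` such that
every finitely generated `A`-module has projective dimension at most `n` (and `⊤` if there
is no such `n`). -/
noncomputable def globalDim (A : Type) [Ring A] : ℕ∞ :=
  sInf {c : ℕ∞ | ∃ n : ℕ, c = (n : ℕ∞) ∧
    ∀ (M : Type) [AddCommGroup M] [Module A M], Module.Finite A M → projDimLE A n M}

/-- A module is indecomposable if it is nonzero and is not the internal direct sum of two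
nonzero submodules. -/
def IsIndecomposableModule (A : Type) [Ring A] (M : Type) [AddCommGroup M] [Module A M] : Prop :=
  Nontrivial M ∧ ∀ N₁ N₂ : Submodule A M, IsCompl N₁ N₂ → N₁ = ⊥ ∨ N₂ = ⊥

/-- A ring has finite representation type if there are only finitely many isomorphism classes
of finitely generated indecomposable left modules. -/
def FiniteRepType (A : Type) [Ring A] : Prop :=
  ∃ S : Set (Σ m : ℕ, Submodule A (Fin m → A)), S.Finite ∧
    ∀ (M : Type) [AddCommGroup M] [Module A M], Module.Finite A M →
      IsIndecomposableModule A M →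
        ∃ p ∈ S, Nonempty (M ≃ₗ[A] ((Fin p.1 → A) ⧸ p.2))

/-- Two rings are Morita equivalent if their categories of modules are equivalent. -/
def MoritaEquivalent (A B : Type) [Ring A] [Ring B] : Prop :=
  Nonempty (ModuleCat.{0} A ≌ ModuleCat.{0} B)

/-- An Auslander algebra: global dimension at most `2`, and there is an exact sequence
`0 → A → I₀ → I₁` with `I₀`, `I₁` both projective and injective (equivalently, in a minimal
injective resolution `0 → A → I₀ → I₁ → I₂ → 0` the terms `I₀` and `I₁` are projective). -/
def IsAuslanderAlgebra (A : Type) [Ring A] : Prop :=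
  globalDim A ≤ 2 ∧
    ∃ (I₀ I₁ : ModuleCat.{0} A) (f : A →ₗ[A] I₀) (g : I₀ →ₗ[A] I₁),
      Module.Injective A I₀ ∧ Module.Projective A I₀ ∧
      Module.Injective A I₁ ∧ Module.Projective A I₁ ∧
      Function.Injective f ∧ LinearMap.ker g = LinearMap.range f

/-- The `i`-th power of a left ideal (with `I ^ 0 = ⊤`). -/
def leftIdealPow (A : Type) [Ring A] (I : Submodule A A) : ℕ → Submodule A A
  | 0 => ⊤
  | n + 1 => Submodule.span A {x : A | ∃ a ∈ I, ∃ b ∈ leftIdealPow A I n, x = a * b}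

end GeneralDefs
section IncidenceAlgebra

variable (k : Type) [CommRing k] (P : Type) [Fintype P] [PartialOrder P] [DecidableEq P]

/-- The incidence algebra of a finite poset `P` over `k`, realized as the subalgebra of
`P × P`-matrices supported on pairs `x ≤ y`. -/
def IncidenceAlg : Subalgebra k (Matrix P P k) where
  carrier := {M : Matrix P P k | ∀ x y : P, ¬ x ≤ y → M x y = 0}
  mul_mem' := fun {M N} hM hN => by
    intro x y hxy
    rw [Matrix.mul_apply]
    refine Finset.sum_eq_zero fun z _ => ?_
    by_cases hxz : x ≤ z
    · have hzy : ¬ z ≤ y := fun h => hxy (le_trans hxz h)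
      rw [hN z y hzy, mul_zero]
    · rw [hM x z hxz, zero_mul]
  one_mem' := fun x y hxy =>
    Matrix.one_apply_ne (fun h => hxy (le_of_eq h))
  add_mem' := fun {M N} hM hN x y hxy => by
    show M x y + N x y = 0
    rw [hM x y hxy, hN x y hxy, add_zero]
  zero_mem' := fun x y _ => rfl
  algebraMap_mem' := fun c x y hxy => by
    rw [Matrix.algebraMap_matrix_apply, if_neg (fun h => hxy (le_of_eq h))]

variable {k P}

/-- The algebra automorphism of the incidence algebra induced by an order automorphism
of the poset. -/
def incAut (e : P ≃o P) : (IncidenceAlg k P) ≃ₐ[k] (IncidenceAlg k P) where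
  toFun M := ⟨fun x y => (M : Matrix P P k) (e.symm x) (e.symm y),
    fun x y hxy => M.2 _ _ (fun h => hxy (e.symm.le_iff_le.mp h))⟩
  invFun M := ⟨fun x y => (M : Matrix P P k) (e x) (e y),
    fun x y hxy => M.2 _ _ (fun h => hxy (e.le_iff_le.mp h))⟩
  left_inv M := Subtype.ext (by funext x y; simp)
  right_inv M := Subtype.ext (by funext x y; simp)
  map_add' M N := Subtype.ext (by funext x y; rfl)
  map_mul' M N := Subtype.ext (by
    funext x y
    simp only [MulMemClass.coe_mul]
    rw [Matrix.mul_apply]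
    exact (Equiv.sum_comp (e.symm.toEquiv)
      (fun z => (M : Matrix P P k) (e.symm x) z * (N : Matrix P P k) z (e.symm y))).symm)
  commutes' c := Subtype.ext (by
    funext x y
    show algebraMap k (Matrix P P k) c (e.symm x) (e.symm y)
      = algebraMap k (Matrix P P k) c x y
    rw [Matrix.algebraMap_matrix_apply, Matrix.algebraMap_matrix_apply]
    by_cases h : x = y
    · subst h; simp
    · rw [if_neg (fun hc => h (e.symm.injective hc)), if_neg h])

/-- The action of a group of order automorphisms of `P` on the incidence algebra. -/
def incRep {G : Type} [Group G] (ρ : G →* (P ≃o P)) :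
    G →* ((IncidenceAlg k P) ≃ₐ[k] (IncidenceAlg k P)) :=
  MonoidHom.mk' (fun g => incAut (ρ g)) (by
    intro g h
    apply AlgEquiv.ext
    intro M
    apply Subtype.ext
    funext x y
    show (M : Matrix P P k) ((ρ (g * h)).symm x) ((ρ (g * h)).symm y) = _
    rw [map_mul ρ]
    rfl)

/-- A poset is connected if any two elements are linked by a chain of comparabilities. -/
def PosetConnected (P : Type) [PartialOrder P] : Prop :=
  ∀ x y : P, Relation.ReflTransGen (fun a b : P => a ≤ b ∨ b ≤ a) x y

end IncidenceAlgebra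

/-!
A `p`-group acting on a finite tree has a fixed vertex: otherwise `p` would divide both the number
of vertices and the number of edges, which differ by one. Since the action is nontrivial and the
tree connected, some fixed vertex has a moved neighbour, whose orbit provides at least `p ≥ 5`
neighbours lying all above or all below it. Four of them, together with the fixed vertex, support
the representations of `𝒫` given by the lines spanned by `(1, 0)`, `(0, 1)`, `(1, 1)` and `(1, t)`
in a plane. For distinct `t` these are bricks without nonzero maps between them.

Each of these `k𝒫`-modules is a retract of the module it coinduces over `k𝒫G`, hence a retract of
an indecomposable `k𝒫G`-module. Finite representation type of `k𝒫G` would therefore make infinitely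
many Hom-orthogonal bricks retracts of one Noetherian `k𝒫`-module, which is impossible because
their sum would be direct.
-/

section Retract

variable {A B : Type*} [Ring A] [Ring B]

/-- The module `V` is a direct summand, up to isomorphism, of the module `X`. -/
def IsRetract (B V X : Type*) [Ring B] [AddCommGroup V] [Module B V] [AddCommGroup X]
    [Module B X] : Prop :=
  ∃ (s : V →ₗ[B] X) (r : X →ₗ[B] V), r ∘ₗ s = LinearMap.id

variable {V X Y : Type*} [AddCommGroup V] [Module B V] [AddCommGroup X] [Module B X]
  [AddCommGroup Y] [Module B Y]

lemma IsRetract.of_isUnit_comp {s : V →ₗ[B] X} {r : X →ₗ[B] V}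
    (h : IsUnit (r ∘ₗ s : Module.End B V)) : IsRetract B V X := by
  obtain ⟨t, ht⟩ := h.exists_left_inv
  exact ⟨s, t ∘ₗ r, ht⟩

lemma IsRetract.trans_linearEquiv (h : IsRetract B V X) (e : X ≃ₗ[B] Y) : IsRetract B V Y := by
  obtain ⟨s, r, hrs⟩ := h
  refine ⟨e ∘ₗ s, r ∘ₗ e.symm, ?_⟩
  ext v
  simpa using LinearMap.congr_fun hrs v

lemma IsRetract.nontrivial [Nontrivial V] (h : IsRetract B V X) : Nontrivial X := by
  obtain ⟨s, r, hrs⟩ := h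
  have hs : Function.Injective s :=
    Function.LeftInverse.injective (g := r) (LinearMap.congr_fun hrs)
  exact hs.nontrivial

variable (B V) in
lemma nontrivial_of_nontrivial_end [Nontrivial (Module.End B V)] : Nontrivial V := by
  by_contra hV
  rw [not_nontrivial_iff_subsingleton] at hV
  exact one_ne_zero (α := Module.End B V) (LinearMap.ext fun _ => Subsingleton.elim _ _)

variable [Module B A] [Module A Y] [IsScalarTower B A Y]

lemma IsRetract.of_isCompl [IsLocalRing (Module.End B V)] {N₁ N₂ : Submodule A Y}
    (hN : IsCompl N₁ N₂) (h : IsRetract B V Y) : IsRetract B V N₁ ∨ IsRetract B V N₂ := by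
  obtain ⟨s, r, hrs⟩ := h
  let component (N N' : Submodule A Y) (hN : IsCompl N N') : Module.End B V :=
    (r ∘ₗ N.subtype.restrictScalars B) ∘ₗ (N.projectionOnto N' hN).restrictScalars B ∘ₗ s
  have hsum : component N₁ N₂ hN + component N₂ N₁ hN.symm = 1 := by
    ext v
    have hsv := congrArg r (Submodule.projection_add_projection_eq_self hN (s v))
    rw [map_add] at hsv
    exact hsv.trans (LinearMap.congr_fun hrs v)
  exact (IsLocalRing.isUnit_or_isUnit_of_add_one hsum).imp .of_isUnit_comp .of_isUnit_comp

end Retract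

section Indecomposable

variable {A B V Y : Type} [Ring A] [Ring B] [Module B A] [AddCommGroup V] [Module B V]
  [AddCommGroup Y] [Module B Y] [Module A Y] [IsScalarTower B A Y]

-- A minimal submodule having `V` as a retract is indecomposable.
lemma IsRetract.exists_isIndecomposableModule [IsLocalRing (Module.End B V)] [IsArtinian A Y]
    (h : IsRetract B V Y) :
    ∃ N : Submodule A Y, IsIndecomposableModule A N ∧ IsRetract B V N := by
  obtain ⟨N, hN, hmin⟩ := WellFounded.has_min (wellFounded_lt (α := Submodule A Y))
    {N | IsRetract B V N}
    ⟨⊤, h.trans_linearEquiv (Submodule.topEquiv.symm.restrictScalars B)⟩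
  have eq_top (K : Submodule A N) (hK : IsRetract B V K) : K = ⊤ := by
    have hKN := hmin _ (hK.trans_linearEquiv ((N.equivSubtypeMap K).restrictScalars B))
    have hmap := eq_of_le_of_not_lt (Submodule.map_subtype_le N K) hKN
    exact Submodule.map_injective_of_injective N.subtype_injective
      (hmap.trans (Submodule.map_subtype_top N).symm)
  refine ⟨N, ⟨?_, fun N₁ N₂ hc => ?_⟩, hN⟩
  · have := nontrivial_of_nontrivial_end B V
    exact hN.nontrivial
  · rcases hN.of_isCompl hc with h₁ | h₂
    · exact Or.inr (eq_bot_of_top_isCompl (eq_top N₁ h₁ ▸ hc))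
    · exact Or.inl (eq_bot_of_isCompl_top (eq_top N₂ h₂ ▸ hc))

lemma finite_of_isRetract_of_homOrthogonal {ι X : Type*} [AddCommGroup X] [Module B X]
    [IsNoetherian B X] {V : ι → Type*} [∀ i, AddCommGroup (V i)] [∀ i, Module B (V i)]
    [∀ i, Nontrivial (V i)]
    (hV : Pairwise fun i j => ∀ T : V i →ₗ[B] V j, T = 0)
    (h : ∀ i, IsRetract B (V i) X) : Finite ι := by
  choose s r hrs using h
  refine WellFoundedGT.finite_of_iSupIndep (t := fun i => LinearMap.range (s i))
    (fun j => ?_) fun i hi => ?_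
  · have hker : ⨆ i, ⨆ _ : i ≠ j, LinearMap.range (s i) ≤ LinearMap.ker (r j) :=
      iSup₂_le fun i hij => LinearMap.range_le_ker_iff.2 (hV hij (r j ∘ₗ s i))
    refine Disjoint.mono_right hker (Submodule.disjoint_def.2 ?_)
    rintro _ ⟨v, rfl⟩ hv
    rw [← LinearMap.id_apply (R := B) v, ← hrs j, LinearMap.comp_apply, LinearMap.mem_ker.1 hv,
      map_zero]
  · obtain ⟨v, hv⟩ := exists_ne (0 : V i)
    have hs : s i = 0 := LinearMap.range_eq_bot.1 hi
    exact hv (by simpa [hs] using (LinearMap.congr_fun (hrs i) v).symm)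

theorem not_finiteRepType_of_homOrthogonal_isRetract [IsNoetherian B A] [IsScalarTower B A A]
    {ι : Type*} [Infinite ι]
    (V : ι → Type) [∀ i, AddCommGroup (V i)] [∀ i, Module B (V i)]
    [∀ i, IsLocalRing (Module.End B (V i))]
    (hV : Pairwise fun i j => ∀ T : V i →ₗ[B] V j, T = 0)
    (Y : ι → Type) [∀ i, AddCommGroup (Y i)] [∀ i, Module B (Y i)] [∀ i, Module A (Y i)]
    [∀ i, IsScalarTower B A (Y i)] [∀ i, IsArtinian A (Y i)] [∀ i, IsNoetherian A (Y i)]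
    (hY : ∀ i, IsRetract B (V i) (Y i)) : ¬ FiniteRepType A := by
  rintro ⟨S, hS, hrep⟩
  have hsummand (i : ι) : ∃ q : S, IsRetract B (V i) ((Fin q.1.1 → A) ⧸ q.1.2) := by
    obtain ⟨N, hN, hret⟩ := (hY i).exists_isIndecomposableModule (A := A)
    obtain ⟨q, hq, ⟨e⟩⟩ := hrep N inferInstance hN
    exact ⟨⟨q, hq⟩, hret.trans_linearEquiv (e.restrictScalars B)⟩
  choose q hq using hsummand
  have : Finite S := hS
  obtain ⟨q₀, hq₀⟩ := Finite.exists_infinite_fiber q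
  let X := (Fin q₀.1.1 → A) ⧸ q₀.1.2
  have hX : ∀ i : q ⁻¹' {q₀}, IsRetract B (V i) X := by
    rintro ⟨i, rfl⟩
    exact hq i
  have : IsNoetherian B X :=
    isNoetherian_of_surjective (q₀.1.2.mkQ.restrictScalars B)
      (LinearMap.range_eq_top.2 q₀.1.2.mkQ_surjective)
  have (i : ι) : Nontrivial (V i) := nontrivial_of_nontrivial_end B (V i)
  have : Finite (q ⁻¹' {q₀}) := finite_of_isRetract_of_homOrthogonal (V := fun i => V i)
    (fun _ _ hij => hV (Subtype.coe_injective.ne hij)) hX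
  exact not_finite (q ⁻¹' {q₀})

end Indecomposable

section Coinduced

variable {A B V : Type*} [Ring A] [Ring B] [Module B A] [AddCommGroup V] [Module B V]

/-- The module `Hom_B(A, V)` coinduced from `V`. The ring `A` acts by right translation, as does
every ring `R` acting on `A` through left multiplication by the elements `c • 1`; this covers
`R = A`, `R = B` and a common ground ring. -/
def Coinduced (B A V : Type*) [Ring A] [Ring B] [Module B A] [AddCommGroup V] [Module B V] :
    Type _ := A →ₗ[B] V

namespace Coinduced

instance : FunLike (Coinduced B A V) A V := inferInstanceAs (FunLike (A →ₗ[B] V) A V)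

instance : AddCommGroup (Coinduced B A V) := inferInstanceAs (AddCommGroup (A →ₗ[B] V))

instance : LinearMapClass (Coinduced B A V) B A V :=
  inferInstanceAs (LinearMapClass (A →ₗ[B] V) B A V)

@[ext]
lemma ext {f g : Coinduced B A V} (h : ∀ a, f a = g a) : f = g := LinearMap.ext h

lemma add_apply (f g : Coinduced B A V) (a : A) : (f + g) a = f a + g a := rfl

variable [IsScalarTower B A A] {R : Type*} [Ring R] [Module R A]

instance : SMul R (Coinduced B A V) where
  smul c f := (f : A →ₗ[B] V) ∘ₗ
    { toFun a := a * c • 1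
      map_add' a a' := add_mul a a' _
      map_smul' b a := smul_mul_assoc b a _ }

lemma smul_apply (c : R) (f : Coinduced B A V) (a : A) : (c • f) a = f (a * c • 1) := rfl

instance [IsScalarTower R A A] : Module R (Coinduced B A V) where
  one_smul f := by ext a; simp only [smul_apply, one_smul, mul_one]
  mul_smul c c' f := by
    ext a
    simp only [smul_apply, mul_assoc, smul_one_mul, mul_smul]
  smul_zero c := rfl
  smul_add c f g := rfl
  add_smul c c' f := by ext a; simp only [smul_apply, add_apply, add_smul, mul_add, map_add]
  zero_smul f := by ext a; rw [smul_apply, zero_smul, mul_zero, map_zero]; rfl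

instance [IsScalarTower R A A] {R' : Type*} [Ring R'] [Module R' A] [SMul R R']
    [IsScalarTower R R' A] : IsScalarTower R R' (Coinduced B A V) where
  smul_assoc c c' f := by
    ext a
    simp only [smul_apply, mul_assoc, smul_one_mul, smul_assoc]

end Coinduced

lemma isRetract_coinduced [IsScalarTower B A A] (π : A →ₗ[B] B)
    (hπ : ∀ a b, π (a * b • 1) = π a * b) (hπ1 : π 1 = 1) : IsRetract B V (Coinduced B A V) := by
  let s : V →ₗ[B] Coinduced B A V :=
    { toFun v := LinearMap.toSpanSingleton B V v ∘ₗ π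
      map_add' v w := Coinduced.ext fun a => smul_add (π a) v w
      map_smul' b v := Coinduced.ext fun a => by
        change π a • b • v = π (a * b • 1) • v
        rw [hπ, mul_smul] }
  let r : Coinduced B A V →ₗ[B] V :=
    { toFun f := f 1
      map_add' f g := rfl
      map_smul' b f := by rw [Coinduced.smul_apply, one_mul, map_smul, RingHom.id_apply] }
  refine ⟨s, r, LinearMap.ext fun v => ?_⟩
  change π 1 • v = v
  rw [hπ1, one_smul]

instance Coinduced.finite {k : Type*} [CommRing k] [IsNoetherianRing k] [Algebra k B]
    [Algebra k A] [IsScalarTower k B A] [IsScalarTower B A A] [Module.Finite k A] [Module k V]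
    [IsScalarTower k B V] [Module.Finite k V] : Module.Finite k (Coinduced B A V) := by
  let toLinearMap : Coinduced B A V →ₗ[k] (A →ₗ[k] V) :=
    { toFun f := LinearMap.restrictScalars k (f : A →ₗ[B] V)
      map_add' f g := rfl
      map_smul' c f := LinearMap.ext fun a => by
        change f (a * c • 1) = c • f a
        rw [mul_smul_one]
        exact LinearMap.map_smul_of_tower (f : A →ₗ[B] V) c a }
  exact Module.Finite.of_injective toLinearMap fun f g h =>
    Coinduced.ext fun a => LinearMap.congr_fun h a

end Coinduced

section MatrixModule

variable {k : Type*} [CommRing k] {B : Type*} [Ring B] [Algebra k B]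
  {m n : Type*} [Fintype m] [DecidableEq m] [Fintype n] [DecidableEq n]

/-- The module of column vectors on which `b` acts through the matrix `R b`. -/
def MatrixModule (_R : B →ₐ[k] Matrix n n k) : Type _ := n → k

namespace MatrixModule

variable (R : B →ₐ[k] Matrix n n k) (R' : B →ₐ[k] Matrix m m k)

instance : AddCommGroup (MatrixModule R) := inferInstanceAs (AddCommGroup (n → k))

instance : Module k (MatrixModule R) := inferInstanceAs (Module k (n → k))

instance : Module.Finite k (MatrixModule R) := inferInstanceAs (Module.Finite k (n → k))

instance : Module B (MatrixModule R) :=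
  Module.compHom (n → k) (Matrix.toLinAlgEquiv'.toAlgHom.comp R).toRingHom

lemma smul_def (b : B) (v : MatrixModule R) : b • v = (R b).mulVec v := rfl

instance : IsScalarTower k B (MatrixModule R) where
  smul_assoc c b v := by
    simp only [smul_def, map_smul]
    exact Matrix.smul_mulVec c (R b) v

variable {R R'}

/-- The matrix of a homomorphism in the standard coordinates. -/
def homMatrix (T : MatrixModule R →ₗ[B] MatrixModule R') : Matrix m n k :=
  LinearMap.toMatrix' (T.restrictScalars k : (n → k) →ₗ[k] (m → k))

lemma homMatrix_mulVec (T : MatrixModule R →ₗ[B] MatrixModule R') (v : n → k) :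
    (homMatrix T).mulVec v = T v :=
  LinearMap.toMatrix'_mulVec (T.restrictScalars k : (n → k) →ₗ[k] (m → k)) v

lemma homMatrix_mul (T : MatrixModule R →ₗ[B] MatrixModule R') (b : B) :
    homMatrix T * R b = R' b * homMatrix T := by
  refine Matrix.mulVec_injective (funext fun v => ?_)
  rw [← Matrix.mulVec_mulVec, ← Matrix.mulVec_mulVec]
  exact (homMatrix_mulVec T _).trans
    ((T.map_smul b v).trans (congrArg (R' b).mulVec (homMatrix_mulVec T v).symm))

lemma homMatrix_injective :
    Function.Injective (homMatrix : (MatrixModule R →ₗ[B] MatrixModule R') → Matrix m n k) :=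
  LinearMap.toMatrix'.injective.comp (LinearMap.restrictScalars_injective k)

lemma homMatrix_zero : homMatrix (0 : MatrixModule R →ₗ[B] MatrixModule R') = 0 :=
  map_zero LinearMap.toMatrix'

lemma homMatrix_algebraMap (c : k) :
    homMatrix (algebraMap k (Module.End B (MatrixModule R)) c) = c • 1 :=
  (map_smul LinearMap.toMatrix' c LinearMap.id).trans (by rw [LinearMap.toMatrix'_id])

lemma isLocalRing_end [IsLocalRing k] [Nonempty n]
    (hR : ∀ T : Matrix n n k, (∀ b, T * R b = R b * T) → ∃ c : k, T = c • 1) :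
    IsLocalRing (Module.End B (MatrixModule R)) := by
  have : Nontrivial (MatrixModule R) := inferInstanceAs (Nontrivial (n → k))
  refine .of_surjective' (algebraMap k (Module.End B (MatrixModule R))) fun T => ?_
  obtain ⟨c, hc⟩ := hR (homMatrix T) (homMatrix_mul T)
  exact ⟨c, homMatrix_injective ((homMatrix_algebraMap c).trans hc.symm)⟩

end MatrixModule

theorem not_finiteRepType_of_matrix {k : Type} [Field k] {A B : Type} [Ring A] [Ring B]
    [Algebra k A] [Algebra k B] [Module B A] [IsScalarTower k B A] [IsScalarTower B A A]
    [Module.Finite k A] (π : A →ₗ[B] B) (hπ : ∀ a b, π (a * b • 1) = π a * b) (hπ1 : π 1 = 1)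
    {n : Type} [Fintype n] [DecidableEq n] [Nonempty n] {ι : Type*} [Infinite ι]
    (R : ι → B →ₐ[k] Matrix n n k)
    (hR : ∀ i, ∀ T : Matrix n n k, (∀ b, T * R i b = R i b * T) → ∃ c : k, T = c • 1)
    (horth : Pairwise fun i j => ∀ T : Matrix n n k, (∀ b, T * R i b = R j b * T) → T = 0) :
    ¬ FiniteRepType A := by
  have (i : ι) := MatrixModule.isLocalRing_end (hR i)
  have : IsNoetherian B A := isNoetherian_of_tower k inferInstance
  have (i : ι) : IsArtinian A (Coinduced B A (MatrixModule (R i))) :=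
    isArtinian_of_tower k inferInstance
  have (i : ι) : IsNoetherian A (Coinduced B A (MatrixModule (R i))) :=
    isNoetherian_of_tower k inferInstance
  refine not_finiteRepType_of_homOrthogonal_isRetract (B := B) (fun i => MatrixModule (R i))
    (fun i j hij T => MatrixModule.homMatrix_injective ?_)
    (fun i => Coinduced B A (MatrixModule (R i))) (fun i => isRetract_coinduced π hπ hπ1)
  rw [horth hij _ (MatrixModule.homMatrix_mul T), MatrixModule.homMatrix_zero]

end MatrixModule

section CoverRep

open Matrix

variable {k : Type} [CommRing k] {P : Type} [Fintype P] [PartialOrder P] [DecidableEq P]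

namespace IncidenceAlg

lemma mul_apply_self (M N : IncidenceAlg k P) (x : P) :
    (M * N).1 x x = M.1 x x * N.1 x x := by
  rw [MulMemClass.coe_mul, mul_apply, Finset.sum_eq_single_of_mem x (mem_univ x)]
  intro z _ hzx
  by_cases hxz : x ≤ z
  · rw [N.2 z x fun h => hzx (h.antisymm hxz), mul_zero]
  · rw [M.2 x z hxz, zero_mul]

lemma mul_apply_of_covBy (M N : IncidenceAlg k P) {x y : P} (hxy : x ⋖ y) :
    (M * N).1 x y = M.1 x x * N.1 x y + M.1 x y * N.1 y y := by
  rw [MulMemClass.coe_mul, mul_apply, ← Finset.sum_pair (f := fun z => M.1 x z * N.1 z y) hxy.ne]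
  refine (Finset.sum_subset (subset_univ {x, y}) fun z _ hz => ?_).symm
  by_cases hxz : x ≤ z
  · by_cases hzy : z ≤ y
    · exact absurd (by simpa using hxy.eq_or_eq hxz hzy) hz
    · rw [N.2 z y hzy, mul_zero]
  · rw [M.2 x z hxz, zero_mul]

end IncidenceAlg

variable {n : Type*} [DecidableEq n] (v : n → P) (U : Matrix n n k)

/-- The matrix through which `M` acts in `coverRep v U`. -/
def coverMatrix (M : IncidenceAlg k P) : Matrix n n k :=
  diagonal (fun i => M.1 (v i) (v i)) + U ⊙ M.1.submatrix v v

variable {v U}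

lemma coverMatrix_eq_diagonal (hU : ∀ i j, U i j ≠ 0 → v i ⋖ v j) {M : IncidenceAlg k P}
    (hM : ∀ a b, a ≠ b → M.1 a b = 0) :
    coverMatrix v U M = diagonal fun i => M.1 (v i) (v i) := by
  ext i j
  have hij : U i j * M.1 (v i) (v j) = 0 := by
    by_cases h : U i j = 0
    · rw [h, zero_mul]
    · rw [hM _ _ (hU i j h).ne, mul_zero]
  rw [coverMatrix, Matrix.add_apply, hadamard_apply, submatrix_apply, hij, add_zero]

variable [Fintype n]

lemma coverMatrix_mul (hU : ∀ i j, U i j ≠ 0 → v i ⋖ v j) (hsq : ∀ i j l, U i j * U j l = 0)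
    (M N : IncidenceAlg k P) :
    coverMatrix v U (M * N) = coverMatrix v U M * coverMatrix v U N := by
  have hUU : (U ⊙ M.1.submatrix v v) * (U ⊙ N.1.submatrix v v) = 0 := by
    ext i l
    refine Finset.sum_eq_zero fun j _ => ?_
    simp only [hadamard_apply]
    rw [mul_mul_mul_comm, hsq, zero_mul]
  have hcov (i j) : U i j * (M * N).1 (v i) (v j) =
      U i j * (M.1 (v i) (v i) * N.1 (v i) (v j) + M.1 (v i) (v j) * N.1 (v j) (v j)) := by
    by_cases h : U i j = 0
    · rw [h, zero_mul, zero_mul]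
    · rw [IncidenceAlg.mul_apply_of_covBy M N (hU i j h)]
  ext i j
  simp only [coverMatrix, add_mul, mul_add, hUU, diagonal_mul_diagonal, Matrix.add_apply,
    hadamard_apply, submatrix_apply, hcov, IncidenceAlg.mul_apply_self, diagonal_mul,
    mul_diagonal, Matrix.zero_apply]
  ring

variable (v U) in
/-- The representation of the incidence algebra in which the basis vector `i` lies at the vertex
`v i` and the matrix `U` gives the action of the covering relations. By `hsq` two consecutive
covering relations act as zero. -/
def coverRep (hU : ∀ i j, U i j ≠ 0 → v i ⋖ v j) (hsq : ∀ i j l, U i j * U j l = 0) :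
    IncidenceAlg k P →ₐ[k] Matrix n n k :=
  AlgHom.ofLinearMap
    { toFun := coverMatrix v U
      map_add' M N := by
        ext i j
        by_cases hij : i = j
        · simp [coverMatrix, hij, hadamard_apply, mul_add]
          ring
        · simp [coverMatrix, hij, hadamard_apply, mul_add]
      map_smul' c M := by
        ext i j
        by_cases hij : i = j <;> simp [coverMatrix, hij, hadamard_apply, mul_add, mul_left_comm] }
    ((coverMatrix_eq_diagonal hU fun _ _ => one_apply_ne).trans (by simp))
    (coverMatrix_mul hU hsq)

variable {U' : Matrix n n k} {hU : ∀ i j, U i j ≠ 0 → v i ⋖ v j}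
  {hU' : ∀ i j, U' i j ≠ 0 → v i ⋖ v j} {hsq : ∀ i j l, U i j * U j l = 0}
  {hsq' : ∀ i j l, U' i j * U' j l = 0} {T : Matrix n n k}

lemma apply_eq_zero_of_intertwines_coverRep
    (hT : ∀ M, T * coverRep v U hU hsq M = coverRep v U' hU' hsq' M * T) {i j : n}
    (hij : v i ≠ v j) : T i j = 0 := by
  let E : IncidenceAlg k P := ⟨diagonal fun a => if a = v i then 1 else 0,
    fun a b hab => diagonal_apply_ne _ fun h => hab h.le⟩
  have hE : ∀ a b, a ≠ b → E.1 a b = 0 := fun a b => diagonal_apply_ne _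
  have h : T * coverMatrix v U E = coverMatrix v U' E * T := hT E
  rw [coverMatrix_eq_diagonal hU hE, coverMatrix_eq_diagonal hU' hE] at h
  simpa [E, hij.symm] using (congrFun₂ h i j).symm

lemma mul_eq_mul_of_intertwines_coverRep
    (hT : ∀ M, T * coverRep v U hU hsq M = coverRep v U' hU' hsq' M * T) : T * U = U' * T := by
  let C : IncidenceAlg k P :=
    ⟨of fun a b => if a ⋖ b then 1 else 0, fun a b hab => if_neg fun h => hab h.le⟩
  have hC {U : Matrix n n k} (hU : ∀ i j, U i j ≠ 0 → v i ⋖ v j) : coverMatrix v U C = U := by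
    ext i j
    have hij : ¬ v i ⋖ v j → U i j = 0 := not_imp_comm.1 (hU i j)
    simpa [coverMatrix, hadamard_apply, C] using fun h => (hij h).symm
  have h : T * coverMatrix v U C = coverMatrix v U' C * T := hT C
  rwa [hC hU, hC hU'] at h

end CoverRep

section FourLines

open Matrix

/-- Generators of four lines in the plane, the last one of slope `l`. -/
def fourLines {k : Type*} [CommRing k] (l : k) : Matrix (Fin 2) (Fin 4) k :=
  !![1, 0, 1, 1;
     0, 1, 1, l]

lemma exists_eq_smul_one_of_mul_fourLines {k : Type*} [CommRing k] {l m : k}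
    {f : Matrix (Fin 2) (Fin 2) k} {t : Fin 4 → k}
    (h : f * fourLines l = fourLines m * diagonal t) :
    ∃ c : k, f = c • 1 ∧ diagonal t = c • (1 : Matrix (Fin 4) (Fin 4) k) ∧ c * l = c * m := by
  have hij (i : Fin 2) (j : Fin 4) :
      f i 0 * fourLines l 0 j + f i 1 * fourLines l 1 j = fourLines m i j * t j := by
    rw [← mul_diagonal, ← h, mul_apply, Fin.sum_univ_two]
  have h₀₀ : f 0 0 = t 0 := by simpa [fourLines] using hij 0 0
  have h₁₀ : f 1 0 = 0 := by simpa [fourLines] using hij 1 0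
  have h₀₁ : f 0 1 = 0 := by simpa [fourLines] using hij 0 1
  have h₁₁ : f 1 1 = t 1 := by simpa [fourLines] using hij 1 1
  have h₀₂ : f 0 0 = t 2 := by simpa [fourLines, h₀₁] using hij 0 2
  have h₁₂ : f 1 1 = t 2 := by simpa [fourLines, h₁₀] using hij 1 2
  have h₀₃ : f 0 0 = t 3 := by simpa [fourLines, h₀₁] using hij 0 3
  have h₁₃ : f 1 1 * l = m * t 3 := by simpa [fourLines, h₁₀] using hij 1 3
  refine ⟨t 2, ?_, ?_, ?_⟩
  · ext i j
    fin_cases i <;> fin_cases j <;> simp [h₀₁, h₁₀, ← h₀₂, h₁₂]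
  · rw [smul_one_eq_diagonal]
    congr 1
    ext i
    fin_cases i <;> simp [← h₀₀, ← h₁₁, ← h₀₃, h₀₂, h₁₂]
  · rw [← h₁₂, h₁₃, ← h₀₃, h₀₂, h₁₂, mul_comm]

end FourLines

section Star

open Matrix

/-- The dimension vector of a star: two basis vectors at the centre, one at each neighbour. -/
def starVertex {P : Type*} (x : P) (y : Fin 4 → P) : Fin 2 ⊕ Fin 4 → P := Sum.elim (fun _ => x) y

lemma exists_eq_fromBlocks_diagonal {R P : Type*} [Zero R] {x : P} {y : Fin 4 → P}
    {T : Matrix (Fin 2 ⊕ Fin 4) (Fin 2 ⊕ Fin 4) R}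
    (hx : ∀ i, y i ≠ x) (hy : Function.Injective y)
    (hT : ∀ i j, starVertex x y i ≠ starVertex x y j → T i j = 0) :
    ∃ f t, T = fromBlocks f 0 0 (diagonal t) := by
  refine ⟨T.toBlocks₁₁, fun i => T (.inr i) (.inr i), ?_⟩
  ext (i | i) (j | j)
  · rfl
  · exact hT _ _ (hx j).symm
  · exact hT _ _ (hx i)
  · by_cases hij : i = j
    · subst hij; simp
    · simpa [hij] using hT (.inr i) (.inr j) (hy.ne hij)

variable {k : Type} [CommRing k] {P : Type} [Fintype P] [PartialOrder P] [DecidableEq P]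
  {x : P} {y : Fin 4 → P}

/-- The four lines as a representation of the star formed by `x` and four elements covering it. -/
def upRep (h : ∀ i, x ⋖ y i) (l : k) :
    IncidenceAlg k P →ₐ[k] Matrix (Fin 2 ⊕ Fin 4) (Fin 2 ⊕ Fin 4) k :=
  coverRep (starVertex x y) (fromBlocks 0 (fourLines l) 0 0)
    (by rintro (_ | _) (_ | _) <;> simp [starVertex, h])
    (by rintro (_ | _) (_ | _) (_ | _) <;> simp)

/-- The four lines as a representation of the star formed by `x` and four elements it covers. -/
def downRep (h : ∀ i, y i ⋖ x) (l : k) :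
    IncidenceAlg k P →ₐ[k] Matrix (Fin 2 ⊕ Fin 4) (Fin 2 ⊕ Fin 4) k :=
  coverRep (starVertex x y) (fromBlocks 0 0 (fourLines l)ᵀ 0)
    (by rintro (_ | _) (_ | _) <;> simp [starVertex, h])
    (by rintro (_ | _) (_ | _) (_ | _) <;> simp)

variable {l m : k} {T : Matrix (Fin 2 ⊕ Fin 4) (Fin 2 ⊕ Fin 4) k}

lemma exists_eq_smul_one_of_intertwines_upRep {h : ∀ i, x ⋖ y i} (hy : Function.Injective y)
    (hT : ∀ M, T * upRep h l M = upRep h m M * T) : ∃ c : k, T = c • 1 ∧ c * l = c * m := by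
  obtain ⟨f, t, rfl⟩ := exists_eq_fromBlocks_diagonal (fun i => (h i).ne') hy
    fun i j => apply_eq_zero_of_intertwines_coverRep hT
  have hft : f * fourLines l = fourLines m * diagonal t := by
    simpa [fromBlocks_multiply] using mul_eq_mul_of_intertwines_coverRep hT
  obtain ⟨c, rfl, ht, hc⟩ := exists_eq_smul_one_of_mul_fourLines hft
  exact ⟨c, by rw [ht, ← fromBlocks_one, fromBlocks_smul, smul_zero, smul_zero], hc⟩

lemma exists_eq_smul_one_of_intertwines_downRep {h : ∀ i, y i ⋖ x} (hy : Function.Injective y)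
    (hT : ∀ M, T * downRep h l M = downRep h m M * T) : ∃ c : k, T = c • 1 ∧ c * l = c * m := by
  obtain ⟨f, t, rfl⟩ := exists_eq_fromBlocks_diagonal (fun i => (h i).ne) hy
    fun i j => apply_eq_zero_of_intertwines_coverRep hT
  have hft : diagonal t * (fourLines l)ᵀ = (fourLines m)ᵀ * f := by
    simpa [fromBlocks_multiply] using mul_eq_mul_of_intertwines_coverRep hT
  have hft' : fᵀ * fourLines m = fourLines l * diagonal t := by
    simpa using congrArg transpose hft.symm
  obtain ⟨c, hf, ht, hc⟩ := exists_eq_smul_one_of_mul_fourLines hft'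
  have hf' : f = c • 1 := by simpa using congrArg transpose hf
  exact ⟨c, by rw [hf', ht, ← fromBlocks_one, fromBlocks_smul, smul_zero, smul_zero], hc.symm⟩

theorem not_finiteRepType_of_star {k : Type} [Field k] [Infinite k] {A : Type} [Ring A]
    [Algebra k A] [Module (IncidenceAlg k P) A] [IsScalarTower k (IncidenceAlg k P) A]
    [IsScalarTower (IncidenceAlg k P) A A] [Module.Finite k A]
    (π : A →ₗ[IncidenceAlg k P] IncidenceAlg k P) (hπ : ∀ a b, π (a * b • 1) = π a * b)
    (hπ1 : π 1 = 1) (hy : Function.Injective y) (h : (∀ i, x ⋖ y i) ∨ ∀ i, y i ⋖ x) :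
    ¬ FiniteRepType A := by
  obtain ⟨R, hR⟩ : ∃ R : k → IncidenceAlg k P →ₐ[k] Matrix (Fin 2 ⊕ Fin 4) (Fin 2 ⊕ Fin 4) k,
      ∀ l m T, (∀ M, T * R l M = R m M * T) → ∃ c : k, T = c • 1 ∧ c * l = c * m := by
    rcases h with h | h
    · exact ⟨upRep h, fun _ _ _ => exists_eq_smul_one_of_intertwines_upRep hy⟩
    · exact ⟨downRep h, fun _ _ _ => exists_eq_smul_one_of_intertwines_downRep hy⟩
  refine not_finiteRepType_of_matrix π hπ hπ1 R (fun l T hT => ?_) fun l m hlm T hT => ?_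
  · obtain ⟨c, hc, -⟩ := hR l l T hT
    exact ⟨c, hc⟩
  · obtain ⟨c, rfl, hc⟩ := hR l m T hT
    rw [(mul_eq_mul_left_iff.1 hc).resolve_left hlm, zero_smul]

end Star

section SkewGroupAlgebra

variable {k : Type} [CommRing k] {Λ : Type} [Ring Λ] [Algebra k Λ] {G : Type} [Group G]
  {σ : G →* (Λ ≃ₐ[k] Λ)}

namespace SGA

variable {R : Type*} [Ring R] [Module R Λ]

instance : SMul R (SGA σ) := ⟨fun c f => ⟨c • f.toFun⟩⟩

lemma smul_toFun (c : R) (f : SGA σ) (g : G) : (c • f).toFun g = c • f.toFun g := rfl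

instance {R' : Type*} [Ring R'] [Module R' Λ] [SMul R R'] [IsScalarTower R R' Λ] :
    IsScalarTower R R' (SGA σ) where
  smul_assoc c d f := congrArg mk (smul_assoc c d f.toFun)

variable [Fintype G]

instance : Module R (SGA σ) where
  one_smul f := by ext g; exact one_smul R _
  mul_smul c d f := by ext g; exact mul_smul c d _
  smul_zero c := by ext; exact smul_zero c
  smul_add c f h := by ext g; exact smul_add c _ _
  add_smul c d f := by ext g; exact add_smul c d _
  zero_smul f := by ext g; exact zero_smul R _

instance [IsScalarTower R Λ Λ] : IsScalarTower R (SGA σ) (SGA σ) where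
  smul_assoc c f h := by
    ext x
    simp only [smul_eq_mul, toFun_mul, smul_toFun, smul_mul_assoc, Finset.smul_sum]

instance : Algebra k (SGA σ) :=
  Algebra.ofModule smul_mul_assoc fun c f h => by
    ext x
    simp only [toFun_mul, smul_toFun, map_smul, mul_smul_comm, Finset.smul_sum]

instance [Module.Finite k Λ] : Module.Finite k (SGA σ) :=
  Module.Finite.of_surjective
    ({ toFun f := ⟨f⟩
       map_add' _ _ := rfl
       map_smul' _ _ := rfl } : (G → Λ) →ₗ[k] SGA σ)
    fun f => ⟨f.toFun, rfl⟩

lemma mul_smul_one_toFun (f : SGA σ) (a : Λ) (x : G) :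
    (f * a • (1 : SGA σ)).toFun x = f.toFun x * σ x a := by
  rw [toFun_mul, Finset.sum_eq_single_of_mem x (mem_univ x)]
  · simp [smul_toFun, toFun_one]
  · intro g _ hg
    simp [smul_toFun, toFun_one, inv_mul_eq_one, hg]

variable (σ) in
/-- The coefficient of the neutral element, a bimodule retraction of `SGA σ` onto `Λ`. -/
def coeffOne : SGA σ →ₗ[Λ] Λ where
  toFun f := f.toFun 1
  map_add' _ _ := rfl
  map_smul' _ _ := rfl

lemma coeffOne_mul_smul_one (f : SGA σ) (a : Λ) :
    coeffOne σ (f * a • 1) = coeffOne σ f * a :=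
  (mul_smul_one_toFun f a 1).trans (by rw [map_one]; rfl)

lemma coeffOne_one : coeffOne σ 1 = 1 := (toFun_one (σ := σ) 1).trans (if_pos rfl)

theorem not_finiteRepType_of_star {k : Type} [Field k] [Infinite k] {P : Type} [Fintype P]
    [PartialOrder P] [DecidableEq P] (σ : G →* (IncidenceAlg k P ≃ₐ[k] IncidenceAlg k P)) {x : P}
    {y : Fin 4 → P} (hy : Function.Injective y) (h : (∀ i, x ⋖ y i) ∨ ∀ i, y i ⋖ x) :
    ¬ FiniteRepType (SGA σ) :=
  _root_.not_finiteRepType_of_star (coeffOne σ) coeffOne_mul_smul_one coeffOne_one hy h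

end SGA

end SkewGroupAlgebra

section FixedPoints

open MulAction

lemma PosetConnected.preconnected_hasse {P : Type} [Finite P] [PartialOrder P]
    (hP : PosetConnected P) : (SimpleGraph.hasse P).Preconnected := by
  have := Fintype.ofFinite P
  have : LocallyFiniteOrder P := Fintype.toLocallyFiniteOrder
  have hle {a b : P} (hab : a ≤ b) : (SimpleGraph.hasse P).Reachable a b :=
    (SimpleGraph.reachable_iff_reflTransGen a b).2
      (Relation.ReflTransGen.mono (fun _ _ => Or.inl) a b (le_iff_reflTransGen_covBy.1 hab))
  intro x y
  induction hP x y with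
  | refl => rfl
  | tail _ hbc ih => exact ih.trans (hbc.elim hle fun hcb => (hle hcb).symm)

variable {P : Type*} [PartialOrder P] {H : Subgroup (P ≃o P)}

lemma smul_covBy_smul_iff (h : H) {a b : P} : h • a ⋖ h • b ↔ a ⋖ b :=
  apply_covBy_apply_iff (h : P ≃o P)

variable (H) in
/-- The covering pairs of a poset, with the diagonal action of a group of automorphisms. -/
def coveringPairs : SubMulAction H (P × P) where
  carrier := {q | q.1 ⋖ q.2}
  smul_mem' h _ hq := (smul_covBy_smul_iff h).2 hq

variable {p : ℕ} [Fact p.Prime]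

-- A fixed covering pair consists of fixed points. Without fixed points `p` would therefore
-- divide both cardinalities.
lemma nonempty_fixedPoints_of_not_modEq [Finite P] (hH : IsPGroup p H)
    (hP : ¬ Nat.card {q : P × P // q.1 ⋖ q.2} ≡ Nat.card P [MOD p]) :
    (fixedPoints H P).Nonempty := by
  by_contra hempty
  have hpairs_empty : IsEmpty (fixedPoints H (coveringPairs H)) :=
    ⟨fun q => hempty ⟨q.1.1.1, fun h => congrArg (fun q => q.1.1) (q.2 h)⟩⟩
  have hpoints_empty : IsEmpty (fixedPoints H P) := ⟨fun x => hempty ⟨x, x.2⟩⟩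
  have hpoints := hH.card_modEq_card_fixedPoints P
  have hpairs := hH.card_modEq_card_fixedPoints (coveringPairs H)
  rw [Nat.card_eq_zero.2 (.inl hpoints_empty)] at hpoints
  rw [Nat.card_eq_zero.2 (.inl hpairs_empty)] at hpairs
  exact hP (hpairs.trans hpoints.symm)

lemma le_card_orbit_of_notMem_fixedPoints [Finite P] (hH : IsPGroup p H) {z : P}
    (hz : z ∉ fixedPoints H P) : p ≤ Nat.card (orbit H z) := by
  obtain ⟨n, hn⟩ := hH.card_orbit z
  have hn0 : n ≠ 0 := by
    rintro rfl
    have := Fintype.ofFinite (orbit H z)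
    rw [Nat.card_eq_fintype_card, pow_zero] at hn
    exact hz (mem_fixedPoints_iff_card_orbit_eq_one.2 hn)
  exact hn ▸ Nat.le_self_pow hn0 p

lemma forall_mem_orbit_covBy_or {x z : P} (hx : x ∈ fixedPoints H P)
    (hxz : x ⋖ z ∨ z ⋖ x) : (∀ y ∈ orbit H z, x ⋖ y) ∨ ∀ y ∈ orbit H z, y ⋖ x := by
  refine hxz.imp ?_ ?_
  all_goals
    rintro h _ ⟨g, rfl⟩
    rw [← hx g]
    exact (smul_covBy_smul_iff g).2 h

theorem exists_star_of_isPGroup {P : Type} [PartialOrder P] [Finite P] (hconn : PosetConnected P)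
    (hP : ¬ Nat.card {q : P × P // q.1 ⋖ q.2} ≡ Nat.card P [MOD p]) {H : Subgroup (P ≃o P)}
    (hH : IsPGroup p H) (hH1 : H ≠ ⊥) :
    ∃ (x : P) (y : Fin p → P), Function.Injective y ∧ ((∀ i, x ⋖ y i) ∨ ∀ i, y i ⋖ x) := by
  obtain ⟨u, hu⟩ := nonempty_fixedPoints_of_not_modEq hH hP
  obtain ⟨v, hv⟩ : ∃ v, v ∉ fixedPoints H P := by
    contrapose! hH1
    exact (Subgroup.eq_bot_iff_forall _).2 fun g hg => RelIso.ext fun v => hH1 v ⟨g, hg⟩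
  obtain ⟨w⟩ := hconn.preconnected_hasse u v
  obtain ⟨d, -, hx, hz⟩ := w.exists_boundary_dart _ hu hv
  let e := (Fin.castLEEmb (le_card_orbit_of_notMem_fixedPoints hH hz)).trans
    (Finite.equivFin (orbit H d.snd)).symm.toEmbedding
  exact ⟨d.fst, fun i => e i, Subtype.val_injective.comp e.injective,
    (forall_mem_orbit_covBy_or hx (SimpleGraph.hasse_adj.1 d.adj)).imp
      (fun h i => h _ (e i).2) fun h i => h _ (e i).2⟩

end FixedPoints

theorem transporter_category_directed_tree_infinite_rep_type_general
    {k : Type} [Field k] [Infinite k] {p : ℕ} [Fact p.Prime] (hp : 4 ≤ p)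
    {P : Type} [Fintype P] [PartialOrder P] [DecidableEq P] (hconn : PosetConnected P)
    (hP : ¬ Nat.card {q : P × P // q.1 ⋖ q.2} ≡ Nat.card P [MOD p])
    {G : Type} [Group G] [Fintype G] (ρ : G →* (P ≃o P))
    {Q : Subgroup G} (hQ : IsPGroup p Q) (hQP : ∃ g ∈ Q, ∃ x : P, ρ g x ≠ x) :
    ¬ FiniteRepType (SGA (incRep (k := k) ρ)) := by
  have hρQ : Q.map ρ ≠ ⊥ := by
    obtain ⟨g, hg, x, hgx⟩ := hQP
    intro hbot
    rw [Subgroup.map_eq_bot_iff] at hbot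
    exact hgx (DFunLike.congr_fun (hbot hg) x)
  obtain ⟨x, y, hy, hstar⟩ := exists_star_of_isPGroup hconn hP (hQ.map ρ) hρQ
  exact SGA.not_finiteRepType_of_star _ (hy.comp (Fin.castLE_injective hp))
    (hstar.imp (fun h i => h _) fun h i => h _)

/-- Let `G` be a finite group having a Sylow `p`-subgroup which acts
nontrivially on a connected finite poset `𝒫`, where `p = char k ≥ 5`, and suppose the Hasse
diagram of `𝒫` is a tree. Then the transporter category `𝒯 = G ∝ 𝒫` (whose category algebra
is the skew group algebra `k𝒫G` of the incidence algebra) is of infinite representation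
type. -/
theorem transporter_category_directed_tree_infinite_rep_type
    (k : Type) [Field k] [IsAlgClosed k] (p : ℕ) [CharP k p] (hp5 : 5 ≤ p)
    (P : Type) [Fintype P] [PartialOrder P] [DecidableEq P]
    (hconn : PosetConnected P)
    (htree : Nat.card {q : P × P // q.1 ⋖ q.2} + 1 = Nat.card P)
    (G : Type) [Group G] [Fintype G] (ρ : G →* (P ≃o P))
    (S : Sylow p G) (hS : ∃ g ∈ (S : Subgroup G), ∃ x : P, ρ g x ≠ x) :
    ¬ FiniteRepType (SGA (incRep (k := k) ρ)) := by
  have hprime : p.Prime := (CharP.char_is_prime_or_zero k p).resolve_right (by lia)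
  have : Fact p.Prime := ⟨hprime⟩
  refine transporter_category_directed_tree_infinite_rep_type_general (by lia) hconn ?_ ρ
    S.isPGroup' hS
  rw [← htree, Nat.left_modEq_add_iff, Nat.dvd_one]
  exact hprime.ne_one
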